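/- arXiv:1001.4701 — 3 statements merged into one kernel-verified Lean document; each statement's English description precedes it below -/
import Mathlib

section
/- Let A₁, A₂ and B₁,…,B_k be elements of an associative algebra satisfying [[A_i, B_j], B_{j'}] = 0 for all i ∈ {1,2} and all j ≠ j'. Then [A₁⋄A₂, Sym_k(B₁,…,B_k)] = Σ_{i=1}^{k} { Sym_{k+1}(A₁, B₁,…,[A₂,B_i],…,B_k) + Sym_{k+1}(A₂, B₁,…,[A₁,B_i],…,B_k) }. -/
/-- Commutator in an associative ring. -/
def brk {A : Type*} [Ring A] (a b : A) : A := a * b - b * a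

/-- Symmetrized product of two elements. -/
def dia {A : Type*} [Ring A] [Algebra ℚ A] (a b : A) : A := (2⁻¹ : ℚ) • (a * b + b * a)

/-- Fully symmetrized product of a list of elements: the average of the products
over all orderings of the list. -/
def symP {A : Type*} [Ring A] [Algebra ℚ A] (L : List A) : A :=
  ((L.length.factorial : ℚ)⁻¹) • ((L.permutations.map List.prod).sum)

section PermSum

variable {ι A : Type*}

/-- A sum over the orderings of a list without repetitions, grouped by the first entry. -/
theorem List.Nodup.sum_permutations'_eq_sum_head [DecidableEq ι] [AddCommMonoid A]
    {L : List ι} (hL : L.Nodup) (hne : L ≠ []) (G : List ι → A) :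
    (L.permutations'.map G).sum
      = ∑ i ∈ L.toFinset, ((L.erase i).permutations'.map fun l => G (i :: l)).sum := by
  induction L generalizing G with
  | nil => exact absurd rfl hne
  | cons a L ih =>
    obtain ⟨ha, hL⟩ := List.nodup_cons.1 hL
    have sum_cons (H : List ι → A) (M : List ι) :
        ((a :: M).permutations'.map H).sum
          = (M.permutations'.map fun l => ((l.permutations'Aux a).map H).sum).sum := by
      rw [List.permutations', List.map_flatMap, List.flatMap, List.sum_flatten, List.map_map]
      rfl
    rw [sum_cons, List.toFinset_cons, Finset.sum_insert (by simpa using ha),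
      List.erase_cons_head]
    rcases eq_or_ne L [] with rfl | hne'
    · simp
    have split_head : ∀ l : List ι, ((l.permutations'Aux a).map G).sum
        = G (a :: l) + (match l with
            | [] => 0
            | x :: l' => ((l'.permutations'Aux a).map fun m => G (x :: m)).sum) := by
      rintro (_ | ⟨x, l⟩) <;> simp [List.permutations'Aux, Function.comp_def]
    simp only [split_head]
    rw [List.sum_map_add]
    congr 1
    rw [ih hL hne']
    refine Finset.sum_congr rfl fun i hi => ?_
    have hia : a ≠ i := by
      rintro rfl
      exact ha (by simpa using hi)
    rw [List.erase_cons_tail (by simpa using hia), sum_cons]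

/-- The sum of the products of the family `f` over all orderings of `S`. -/
noncomputable def permSum [Semiring A] (f : ι → A) (S : Finset ι) : A :=
  (S.toList.permutations.map fun l => (l.map f).prod).sum

theorem sum_permutations_eq_permSum [DecidableEq ι] [Semiring A] (f : ι → A) {L : List ι}
    (hL : L.Nodup) :
    ((L.map f).permutations.map List.prod).sum = permSum f L.toFinset := by
  rw [permSum, ← List.map_permutations, List.map_map]
  exact (((List.toFinset_toList hL).symm.permutations).map _).sum_eq

@[simp]
theorem permSum_empty [Semiring A] (f : ι → A) : permSum f ∅ = 1 := by
  simp [permSum]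

theorem permSum_eq_sum_head [DecidableEq ι] [Semiring A] (f : ι → A) {S : Finset ι}
    (hS : S.Nonempty) : permSum f S = ∑ i ∈ S, f i * permSum f (S.erase i) := by
  have key (T : Finset ι) (G : List ι → A) {L : List ι} (h : L.Perm T.toList) :
      (T.toList.permutations.map G).sum = (L.permutations'.map G).sum :=
    (((h.symm.permutations).trans (List.permutations_perm_permutations' L)).map G).sum_eq
  rw [permSum, key S _ (List.Perm.refl _), (Finset.nodup_toList S).sum_permutations'_eq_sum_head
    (by simpa using hS.ne_empty), Finset.toList_toFinset]
  refine Finset.sum_congr rfl fun i hi => ?_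
  have hperm : (S.toList.erase i).Perm (S.erase i).toList := by
    rw [List.perm_ext_iff_of_nodup ((Finset.nodup_toList S).erase i) (Finset.nodup_toList _)]
    intro x
    rw [(Finset.nodup_toList S).mem_erase_iff]
    simp
  rw [permSum, key _ _ hperm]
  simp [List.sum_map_mul_left]

theorem permSum_congr [Semiring A] {f g : ι → A} {S : Finset ι} (h : ∀ i ∈ S, f i = g i) :
    permSum f S = permSum g S := by
  unfold permSum
  congr 1
  refine List.map_congr_left fun l hl => ?_
  congr 1
  refine List.map_congr_left fun i hi => h i ?_
  rw [List.mem_permutations] at hl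
  simpa using hl.mem_iff.1 hi

theorem permSum_map {κ : Type*} [Semiring A] (f : κ → A) (e : ι ↪ κ) (S : Finset ι) :
    permSum f (S.map e) = permSum (f ∘ e) S := by
  classical
  have h := sum_permutations_eq_permSum (f ∘ e) (Finset.nodup_toList S)
  have h' := sum_permutations_eq_permSum f ((Finset.nodup_toList S).map e.injective)
  rw [List.map_map, h, Finset.toList_toFinset] at h'
  rw [h']
  congr 1
  ext
  simp

/-- The sum of the products over all orderings of `a` together with the family `f` on `S`. -/
noncomputable def permSumCons [Semiring A] (a : A) (f : ι → A) (S : Finset ι) : A :=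
  permSum (fun o : Option ι => o.elim a f) (Finset.insertNone S)

theorem permSumCons_congr [Semiring A] (a : A) {f g : ι → A} {S : Finset ι}
    (h : ∀ i ∈ S, f i = g i) : permSumCons a f S = permSumCons a g S :=
  permSum_congr fun o ho => by
    cases o with
    | none => rfl
    | some i => exact h i (by simpa using ho)

theorem permSumCons_eq_sum_head [DecidableEq ι] [Semiring A] (a : A) (f : ι → A)
    (S : Finset ι) :
    permSumCons a f S = a * permSum f S + ∑ i ∈ S, f i * permSumCons a f (S.erase i) := by
  rw [permSumCons, permSum_eq_sum_head _ ⟨none, by simp⟩, Finset.sum_insertNone]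
  congr 1
  · have : (Finset.insertNone S).erase none = S.map Function.Embedding.some := by
      ext o
      cases o <;> simp
    rw [this, permSum_map]
    rfl
  · refine Finset.sum_congr rfl fun i _ => ?_
    have : (Finset.insertNone S).erase (some i) = Finset.insertNone (S.erase i) := by
      ext o
      cases o <;> simp
    rw [this]
    rfl

@[simp]
theorem permSumCons_empty [Semiring A] (a : A) (f : ι → A) : permSumCons a f ∅ = a := by
  classical
  rw [permSumCons_eq_sum_head]
  simp

/-- Reordering of the double sum over the replaced index and the leading index. -/
theorem sum_update_mul_erase [DecidableEq ι] [Semiring A] (B c : ι → A) (S : Finset ι)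
    (G : (ι → A) → Finset ι → A)
    (hG : ∀ (f g : ι → A) (T : Finset ι), (∀ i ∈ T, f i = g i) → G f T = G g T) :
    ∑ i ∈ S, ∑ j ∈ S, Function.update B i (c i) j * G (Function.update B i (c i)) (S.erase j)
      = ∑ i ∈ S, c i * G B (S.erase i)
        + ∑ j ∈ S, B j * ∑ i ∈ S.erase j, G (Function.update B i (c i)) (S.erase j) := by
  have h (i : ι) (hi : i ∈ S) :
      ∑ j ∈ S, Function.update B i (c i) j * G (Function.update B i (c i)) (S.erase j)
        = c i * G B (S.erase i)
          + ∑ j ∈ S.erase i, B j * G (Function.update B i (c i)) (S.erase j) := by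
    rw [← Finset.add_sum_erase _ _ hi, Function.update_self]
    congr 1
    · congr 1
      exact hG _ _ _ fun j hj => Function.update_of_ne (Finset.ne_of_mem_erase hj) _ _
    · refine Finset.sum_congr rfl fun j hj => ?_
      rw [Function.update_of_ne (Finset.ne_of_mem_erase hj)]
  rw [Finset.sum_congr rfl h, Finset.sum_add_distrib]
  congr 1
  simp only [Finset.mul_sum]
  refine Finset.sum_comm' fun i j => ?_
  simp only [Finset.mem_erase]
  tauto

end PermSum

section WordSum

variable {E : Type*} [Ring E]

/-- The sum of all words with one letter `a` and `n` letters `b`. -/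
def wordSum (a b : E) : ℕ → E
  | 0 => a
  | n + 1 => a * b ^ (n + 1) + b * wordSum a b n

/-- The sum of all words with one letter `a`, one letter `c` and `n` letters `b`. -/
def wordSum₂ (a c b : E) : ℕ → E
  | 0 => a * c + c * a
  | n + 1 => a * wordSum c b (n + 1) + c * wordSum a b (n + 1) + b * wordSum₂ a c b n

theorem mul_pow_succ_of_commute {a b d : E} (hd : a * b = b * a + d) (hdb : Commute d b)
    (n : ℕ) : a * b ^ (n + 1) = b ^ (n + 1) * a + ((n : ℤ) + 1) • (b ^ n * d) := by
  induction n with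
  | zero => simp [hd]
  | succ n ih =>
    calc a * b ^ (n + 1 + 1) = a * b ^ (n + 1) * b := by rw [pow_succ b (n + 1), mul_assoc]
      _ = b ^ (n + 1) * (a * b) + ((n : ℤ) + 1) • (b ^ n * (d * b)) := by
        rw [ih, add_mul, smul_mul_assoc, mul_assoc, mul_assoc]
      _ = _ := by
        rw [hd, hdb.eq, mul_add, ← mul_assoc, ← mul_assoc, ← pow_succ, ← pow_succ]
        push_cast
        module

theorem wordSum_of_commute {b c : E} (hcb : Commute c b) (n : ℕ) :
    wordSum c b n = ((n : ℤ) + 1) • (b ^ n * c) := by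
  induction n with
  | zero => simp [wordSum]
  | succ n ih =>
    rw [wordSum, ih, (hcb.pow_right _).eq, mul_smul_comm, ← mul_assoc, ← pow_succ']
    push_cast
    module

theorem two_smul_wordSum_succ {a b d : E} (hd : a * b = b * a + d) (hdb : Commute d b) (n : ℕ) :
    (2 : ℤ) • wordSum a b (n + 1) = (2 * ((n : ℤ) + 2)) • (b ^ (n + 1) * a)
      + (((n : ℤ) + 1) * (n + 2)) • (b ^ n * d) := by
  induction n with
  | zero =>
    simp only [wordSum, zero_add, pow_one, hd, pow_zero, one_mul, Nat.cast_zero]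
    module
  | succ n ih =>
    rw [wordSum, smul_add, ← mul_smul_comm (2 : ℤ) b, ih, mul_pow_succ_of_commute hd hdb]
    simp only [mul_add, mul_smul_comm, ← mul_assoc, ← pow_succ']
    push_cast
    module

theorem mul_pow_add_two {b X Y Z : E} (hX : X * b = b * X + Y) (hY : Y * b = b * Y + (2 : ℤ) • Z)
    (hZ : Commute Z b) (n : ℕ) :
    X * b ^ (n + 2) = b ^ (n + 2) * X + ((n : ℤ) + 2) • (b ^ (n + 1) * Y)
      + (((n : ℤ) + 1) * (n + 2)) • (b ^ n * Z) := by
  induction n with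
  | zero =>
    have : X * b ^ 2 = b * (X * b) + Y * b := by
      rw [← mul_assoc, ← add_mul, ← hX, pow_two, mul_assoc]
    rw [zero_add, this, hX, hY]
    simp only [mul_add, ← mul_assoc, pow_two, zero_add, pow_one, pow_zero, one_mul, Nat.cast_zero]
    module
  | succ n ih =>
    rw [show n + 1 + 2 = n + 2 + 1 by ring, pow_succ b (n + 2), ← mul_assoc, ih]
    simp only [add_mul, smul_mul_assoc]
    simp only [mul_assoc]
    rw [hX, hY, hZ.eq]
    simp only [mul_add, mul_smul_comm, ← mul_assoc, ← pow_succ]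
    push_cast
    module

theorem two_smul_wordSum₂_add {a₁ a₂ b c d : E} (hd : a₁ * b = b * a₁ + d)
    (hc : a₂ * b = b * a₂ + c) (hdb : Commute d b) (hcb : Commute c b) (n : ℕ) :
    (2 : ℤ) • (wordSum₂ a₁ c b n + wordSum₂ a₂ d b n)
      = ((n : ℤ) + 2) • ((a₁ * a₂ + a₂ * a₁) * b ^ (n + 1)
        - b ^ (n + 1) * (a₁ * a₂ + a₂ * a₁)) := by
  obtain ⟨Y, hYdef⟩ : ∃ Y, Y = a₁ * c + c * a₁ + (a₂ * d + d * a₂) := ⟨_, rfl⟩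
  obtain ⟨Z, hZdef⟩ : ∃ Z, Z = c * d + d * c := ⟨_, rfl⟩
  have hX : (a₁ * a₂ + a₂ * a₁) * b = b * (a₁ * a₂ + a₂ * a₁) + Y := by
    rw [add_mul, mul_assoc, mul_assoc, hc, hd, mul_add, mul_add, ← mul_assoc, ← mul_assoc, hc, hd,
      hYdef]
    noncomm_ring
  have hY : Y * b = b * Y + (2 : ℤ) • Z := by
    simp only [hYdef, hZdef, add_mul, mul_assoc, hcb.eq, hdb.eq, hd, hc, mul_add]
    simp only [← mul_assoc, hcb.eq, hdb.eq, hd, hc, add_mul]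
    module
  have hZ : Commute Z b := hZdef ▸ (hcb.mul_left hdb).add_left (hdb.mul_left hcb)
  have step (n : ℕ) : (2 : ℤ) • (wordSum₂ a₁ c b (n + 1) + wordSum₂ a₂ d b (n + 1))
      = (2 * ((n : ℤ) + 2)) • (b ^ (n + 1) * Y) + (3 * ((n : ℤ) + 1) * (n + 2)) • (b ^ n * Z)
        + b * ((2 : ℤ) • (wordSum₂ a₁ c b n + wordSum₂ a₂ d b n)) := by
    have h₁ := congrArg (c * ·) (two_smul_wordSum_succ hd hdb n)
    have h₂ := congrArg (d * ·) (two_smul_wordSum_succ hc hcb n)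
    have h₃ := congrArg (· * c) (mul_pow_succ_of_commute hd hdb n)
    have h₄ := congrArg (· * d) (mul_pow_succ_of_commute hc hcb n)
    simp only [mul_add, add_mul, mul_smul_comm, smul_mul_assoc, ← mul_assoc,
      (hcb.pow_right _).eq, (hdb.pow_right _).eq] at h₁ h₂ h₃ h₄
    simp only [wordSum₂, wordSum_of_commute hcb, wordSum_of_commute hdb, hYdef, hZdef, mul_add,
      mul_smul_comm, ← mul_assoc]
    push_cast
    linear_combination (norm := module) h₁ + h₂ + (2 * ((n : ℤ) + 2)) • h₃ + (2 * ((n : ℤ) + 2)) • h₄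
  have closed (n : ℕ) : (2 : ℤ) • (wordSum₂ a₁ c b (n + 1) + wordSum₂ a₂ d b (n + 1))
      = (((n : ℤ) + 2) * (n + 3)) • (b ^ (n + 1) * Y)
        + (((n : ℤ) + 1) * (n + 2) * (n + 3)) • (b ^ n * Z) := by
    induction n with
    | zero =>
      rw [step, wordSum₂, wordSum₂, ← hYdef, mul_smul_comm, zero_add, pow_one, Nat.cast_zero]
      module
    | succ n ih =>
      rw [step, ih]
      simp only [mul_add, mul_smul_comm, ← mul_assoc, ← pow_succ']
      push_cast
      module
  cases n with
  | zero =>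
    rw [wordSum₂, wordSum₂, ← hYdef, zero_add, pow_one, hX, Nat.cast_zero]
    module
  | succ n =>
    rw [closed, mul_pow_add_two hX hY hZ]
    push_cast
    module

end WordSum

section Operators

variable {ι A : Type*} [Ring A]

/-- Pointwise left multiplication by `a` on functions of finite sets. -/
def constOp (ι : Type*) (a : A) : Module.End ℤ (Finset ι → A) where
  toFun F S := a * F S
  map_add' F G := by ext S; simp [mul_add]
  map_smul' z F := by ext S; exact mul_smul_comm z a (F S)

theorem constOp_apply (a : A) (F : Finset ι → A) (S : Finset ι) : constOp ι a F S = a * F S := rfl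

variable [DecidableEq ι]

/-- Left multiplication by the generating element `∑ i, tᵢ X i` with square-zero variables `tᵢ`,
acting on families of coefficients indexed by finite sets of variables. -/
def vecOp (X : ι → A) : Module.End ℤ (Finset ι → A) where
  toFun F S := ∑ i ∈ S, X i * F (S.erase i)
  map_add' F G := by ext S; simp [mul_add, Finset.sum_add_distrib]
  map_smul' z F := by
    ext S
    simp only [Pi.smul_apply, mul_smul_comm, Finset.smul_sum, eq_intCast, Int.cast_id]

theorem vecOp_apply (X : ι → A) (F : Finset ι → A) (S : Finset ι) :
    vecOp X F S = ∑ i ∈ S, X i * F (S.erase i) := rfl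

theorem constOp_mul_vecOp (a : A) (X : ι → A) :
    constOp ι a * vecOp X = vecOp X * constOp ι a + vecOp fun i => brk a (X i) := by
  ext F S
  simp only [Module.End.mul_apply, LinearMap.add_apply, Pi.add_apply, constOp_apply, vecOp_apply,
    Finset.mul_sum, ← Finset.sum_add_distrib, brk]
  refine Finset.sum_congr rfl fun i _ => ?_
  noncomm_ring

theorem commute_vecOp {X Y : ι → A} (h : ∀ i j, i ≠ j → Commute (X i) (Y j)) :
    Commute (vecOp X) (vecOp Y) := by
  ext F S
  simp only [Module.End.mul_apply, vecOp_apply, Finset.mul_sum]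
  rw [Finset.sum_comm' (t' := S) (s' := fun j => S.erase j)
    (by simp only [Finset.mem_erase]; tauto)]
  refine Finset.sum_congr rfl fun j _ => Finset.sum_congr rfl fun i hi => ?_
  rw [← mul_assoc, ← mul_assoc, (h i j (Finset.ne_of_mem_erase hi)).eq, Finset.erase_right_comm]

theorem vecOp_pow_single (B : ι → A) (x : A) (n : ℕ) {S : Finset ι} (hS : S.card = n) :
    (vecOp B ^ n) (Pi.single ∅ x) S = permSum B S * x := by
  induction n generalizing S with
  | zero =>
    obtain rfl := Finset.card_eq_zero.1 hS
    simp
  | succ n ih =>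
    rw [pow_succ', Module.End.mul_apply, vecOp_apply,
      permSum_eq_sum_head B (Finset.card_pos.1 (by omega)), Finset.sum_mul]
    refine Finset.sum_congr rfl fun i hi => ?_
    rw [ih (by rw [Finset.card_erase_of_mem hi]; omega), mul_assoc]

theorem wordSum_constOp_single (a : A) (B : ι → A) (n : ℕ) {S : Finset ι} (hS : S.card = n) :
    wordSum (constOp ι a) (vecOp B) n (Pi.single ∅ 1) S = permSumCons a B S := by
  induction n generalizing S with
  | zero =>
    obtain rfl := Finset.card_eq_zero.1 hS
    simp [wordSum, constOp_apply]
  | succ n ih =>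
    rw [wordSum, LinearMap.add_apply, Pi.add_apply, Module.End.mul_apply, Module.End.mul_apply,
      constOp_apply, vecOp_pow_single B 1 _ hS, mul_one, vecOp_apply, permSumCons_eq_sum_head]
    congr 1
    refine Finset.sum_congr rfl fun i hi => ?_
    rw [ih (by rw [Finset.card_erase_of_mem hi]; omega)]

theorem wordSum_vecOp_single (c B : ι → A) (n : ℕ) {S : Finset ι} (hS : S.card = n + 1) :
    wordSum (vecOp c) (vecOp B) n (Pi.single ∅ 1) S
      = ∑ i ∈ S, permSum (Function.update B i (c i)) S := by
  induction n generalizing S with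
  | zero =>
    obtain ⟨i, rfl⟩ := Finset.card_eq_one.1 hS
    simp [wordSum, vecOp_apply, permSum_eq_sum_head]
  | succ n ih =>
    have hne : S.Nonempty := Finset.card_pos.1 (by omega)
    rw [Finset.sum_congr rfl fun i _ => permSum_eq_sum_head (Function.update B i (c i)) hne,
      sum_update_mul_erase B c S permSum fun _ _ _ => permSum_congr, wordSum,
      LinearMap.add_apply, Pi.add_apply, Module.End.mul_apply, Module.End.mul_apply,
      vecOp_apply, vecOp_apply]
    have hcard (i : ι) (hi : i ∈ S) : (S.erase i).card = n + 1 := by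
      rw [Finset.card_erase_of_mem hi]; omega
    congr 1 <;> refine Finset.sum_congr rfl fun i hi => ?_
    · rw [vecOp_pow_single B 1 _ (hcard i hi), mul_one]
    · rw [ih (hcard i hi)]

theorem wordSum₂_single (a : A) (c B : ι → A) (n : ℕ) {S : Finset ι} (hS : S.card = n + 1) :
    wordSum₂ (constOp ι a) (vecOp c) (vecOp B) n (Pi.single ∅ 1) S
      = ∑ i ∈ S, permSumCons a (Function.update B i (c i)) S := by
  induction n generalizing S with
  | zero =>
    obtain ⟨i, rfl⟩ := Finset.card_eq_one.1 hS
    rw [Finset.sum_singleton, permSumCons_eq_sum_head]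
    simp [wordSum₂, vecOp_apply, constOp_apply, permSum_eq_sum_head]
  | succ n ih =>
    rw [Finset.sum_congr rfl fun i _ => permSumCons_eq_sum_head a (Function.update B i (c i)) S,
      Finset.sum_add_distrib,
      sum_update_mul_erase B c S (permSumCons a) fun _ _ _ => permSumCons_congr a, wordSum₂,
      LinearMap.add_apply, LinearMap.add_apply, Pi.add_apply, Pi.add_apply,
      Module.End.mul_apply, Module.End.mul_apply, Module.End.mul_apply,
      constOp_apply, vecOp_apply, vecOp_apply, wordSum_vecOp_single c B _ hS, Finset.mul_sum,
      add_assoc]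
    have hcard (i : ι) (hi : i ∈ S) : (S.erase i).card = n + 1 := by
      rw [Finset.card_erase_of_mem hi]; omega
    congr 2 <;> refine Finset.sum_congr rfl fun i hi => ?_
    · rw [wordSum_constOp_single a B _ (hcard i hi)]
    · rw [ih (hcard i hi)]

/-- The commutator identity with the normalising factorials cleared. -/
theorem two_smul_sum_permSumCons (a₁ a₂ : A) (B : ι → A)
    (h₁ : ∀ i j, i ≠ j → Commute (brk a₁ (B i)) (B j))
    (h₂ : ∀ i j, i ≠ j → Commute (brk a₂ (B i)) (B j)) {n : ℕ} {S : Finset ι}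
    (hS : S.card = n + 1) :
    (2 : ℤ) • ∑ i ∈ S, (permSumCons a₁ (Function.update B i (brk a₂ (B i))) S
        + permSumCons a₂ (Function.update B i (brk a₁ (B i))) S)
      = ((n : ℤ) + 2) • brk (a₁ * a₂ + a₂ * a₁) (permSum B S) := by
  have key := congrArg (fun T : Module.End ℤ (Finset ι → A) => T (Pi.single ∅ 1) S)
    (two_smul_wordSum₂_add (constOp_mul_vecOp a₁ B) (constOp_mul_vecOp a₂ B)
      (commute_vecOp h₁) (commute_vecOp h₂) n)
  have hconst : (constOp ι a₁ * constOp ι a₂ + constOp ι a₂ * constOp ι a₁ :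
      Module.End ℤ (Finset ι → A)) = constOp ι (a₁ * a₂ + a₂ * a₁) := by
    ext F S
    simp [constOp_apply, add_mul, mul_assoc]
  have hsingle (x : A) : constOp ι x (Pi.single ∅ 1) = Pi.single ∅ x := by
    ext S
    rcases eq_or_ne S ∅ with rfl | hne <;> simp [constOp_apply, *]
  simp only [hconst, LinearMap.smul_apply, LinearMap.add_apply, LinearMap.sub_apply, Pi.smul_apply,
    Pi.add_apply, Pi.sub_apply, Module.End.mul_apply, hsingle, wordSum₂_single _ _ _ _ hS,
    vecOp_pow_single _ _ _ hS] at key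
  rw [constOp_apply, vecOp_pow_single _ _ _ hS, mul_one] at key
  rw [Finset.sum_add_distrib, key, brk]

end Operators

theorem symP_ofFn {A : Type*} [Ring A] [Algebra ℚ A] {k : ℕ} (f : Fin k → A) :
    symP (List.ofFn f) = ((k.factorial : ℚ)⁻¹) • permSum f Finset.univ := by
  rw [symP, List.length_ofFn, List.ofFn_eq_map,
    sum_permutations_eq_permSum f (List.nodup_finRange k), List.toFinset_finRange]

theorem symP_cons_ofFn {A : Type*} [Ring A] [Algebra ℚ A] {k : ℕ} (a : A) (f : Fin k → A) :
    symP (a :: List.ofFn f)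
      = (((k + 1).factorial : ℚ)⁻¹) • permSumCons a f Finset.univ := by
  have hlist : a :: List.ofFn f
      = (none :: (List.finRange k).map some).map fun o : Option (Fin k) => o.elim a f := by
    simp [List.ofFn_eq_map, Function.comp_def]
  have hnodup : (none :: (List.finRange k).map some).Nodup :=
    List.nodup_cons.2 ⟨by simp, (List.nodup_finRange k).map (Option.some_injective _)⟩
  rw [symP, List.length_cons, List.length_ofFn, hlist, sum_permutations_eq_permSum _ hnodup,
    permSumCons]
  congr 2
  ext o
  cases o <;> simp

theorem stmt8 {A : Type*} [Ring A] [Algebra ℚ A] {k : ℕ} (a₁ a₂ : A) (B : Fin k → A)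
    (h : ∀ a ∈ ({a₁, a₂} : Set A), ∀ j j' : Fin k, j ≠ j' →
      brk (brk a (B j)) (B j') = 0) :
    brk (dia a₁ a₂) (symP (List.ofFn B))
      = ∑ i : Fin k,
          (symP (a₁ :: List.ofFn (Function.update B i (brk a₂ (B i))))
            + symP (a₂ :: List.ofFn (Function.update B i (brk a₁ (B i))))) := by
  have hcomm (a : A) (ha : a ∈ ({a₁, a₂} : Set A)) (i j : Fin k) (hij : i ≠ j) :
      Commute (brk a (B i)) (B j) := sub_eq_zero.1 (h a ha i j hij)
  simp only [symP_ofFn, symP_cons_ofFn, ← smul_add, ← Finset.smul_sum]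
  cases k with
  | zero => simp [brk]
  | succ n =>
    have key := two_smul_sum_permSumCons a₁ a₂ B (hcomm a₁ (by simp)) (hcomm a₂ (by simp))
      (n := n) (S := Finset.univ) (by simp)
    have hbrk (r s : ℚ) (x y : A) : brk (r • x) (s • y) = (r * s) • brk x y := by
      simp only [brk, smul_mul_smul_comm, smul_sub, mul_comm s r]
    rw [← Int.cast_smul_eq_zsmul ℚ, ← Int.cast_smul_eq_zsmul ℚ] at key
    rw [dia, hbrk, ← inv_smul_smul₀ (two_ne_zero (α := ℚ)) (∑ i, _),
      show (2 : ℚ) = ((2 : ℤ) : ℚ) by norm_num, key, smul_smul, smul_smul,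
      Nat.factorial_succ (n + 1)]
    congr 1
    push_cast
    field_simp
    ring
end

section
/- Let L₁,…,L_l and M₁,…,M_m be elements of an associative algebra such that each commutator [L_i, M_j] = d_{ij}·1 is a central scalar multiple of the identity. Then Sym_l(L₁,…,L_l)·Sym_m(M₁,…,M_m) = Σ_{h=0}^{min(l,m)} Σ_{I,J,π} 2^{−h} d_{i₁ j_{π(1)}}⋯d_{i_h j_{π(h)}} Sym_{l+m−2h}(L's with indices outside I, M's with indices outside J), where I ranges over h-element subsets of {1,…,l}, J over h-element subsets of {1,…,m}, and π over bijections from I to J (Wick-type formula for symmetrized products). -/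
open Finset AddMonoidAlgebra

/-- Cauchy product of two sequences in a ring. -/
def cauchyProd {B : Type*} [Ring B] (u v : ℕ → B) (n : ℕ) : B :=
  ∑ p ∈ antidiagonal n, u p.1 * v p.2

/-- Leibniz rule for the Cauchy product. -/
theorem succ_smul_cauchyProd {B : Type*} [Ring B] [Algebra ℚ B] (u v : ℕ → B) (n : ℕ) :
    ((n + 1 : ℕ) : ℚ) • cauchyProd u v (n + 1) =
      cauchyProd (fun i => ((i + 1 : ℕ) : ℚ) • u (i + 1)) v n +
        cauchyProd u (fun i => ((i + 1 : ℕ) : ℚ) • v (i + 1)) n := by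
  have split : ((n + 1 : ℕ) : ℚ) • cauchyProd u v (n + 1) =
      ∑ p ∈ antidiagonal (n + 1), ((p.1 : ℚ) • u p.1) * v p.2 +
        ∑ p ∈ antidiagonal (n + 1), u p.1 * ((p.2 : ℚ) • v p.2) := by
    rw [cauchyProd, smul_sum, ← sum_add_distrib]
    refine sum_congr rfl fun p hp => ?_
    rw [← mem_antidiagonal.mp hp, smul_mul_assoc, mul_smul_comm, ← add_smul]
    push_cast
    rfl
  rw [split, Nat.sum_antidiagonal_succ, Nat.sum_antidiagonal_succ']
  simp [cauchyProd]

/-- The sequence of terms of the exponential series of `x`. -/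
def expTerm {B : Type*} [Ring B] [Algebra ℚ B] (x : B) (n : ℕ) : B :=
  (n.factorial : ℚ)⁻¹ • x ^ n

theorem succ_smul_expTerm {B : Type*} [Ring B] [Algebra ℚ B] (x : B) (n : ℕ) :
    ((n + 1 : ℕ) : ℚ) • expTerm x (n + 1) = x * expTerm x n := by
  rw [expTerm, expTerm, smul_smul, mul_smul_comm, pow_succ', Nat.factorial_succ]
  congr 1
  push_cast
  field_simp

theorem succ_smul_expTerm_mul {B : Type*} [Ring B] [Algebra ℚ B] (x : B) (n : ℕ) :
    ((n + 1 : ℕ) : ℚ) • expTerm x (n + 1) = expTerm x n * x := by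
  rw [succ_smul_expTerm, expTerm, mul_smul_comm, smul_mul_assoc, pow_mul_comm']

theorem expTerm_succ_mul_sub {B : Type*} [Ring B] [Algebra ℚ B] {x y c : B}
    (hc : x * y - y * x = c) (hx : Commute c x) (n : ℕ) :
    expTerm x (n + 1) * y - y * expTerm x (n + 1) = c * expTerm x n := by
  have key : ∀ k : ℕ, x ^ (k + 1) * y - y * x ^ (k + 1) = ((k + 1 : ℕ) : ℚ) • (c * x ^ k) := by
    intro k
    induction k with
    | zero => simpa using hc
    | succ k ih =>
      have e : x ^ (k + 1 + 1) * y - y * x ^ (k + 1 + 1) =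
          x * (x ^ (k + 1) * y - y * x ^ (k + 1)) + (x * y - y * x) * x ^ (k + 1) := by
        rw [pow_succ' x (k + 1)]; noncomm_ring
      rw [e, ih, hc, mul_smul_comm, ← mul_assoc, ← hx.eq, mul_assoc, ← pow_succ']
      push_cast
      module
  rw [expTerm, smul_mul_assoc, mul_smul_comm, ← smul_sub, key, expTerm, smul_smul, mul_smul_comm,
    Nat.factorial_succ]
  congr 1
  push_cast
  field_simp

/-- The sequence of coefficients of `exp (c t² / 2)`. -/
def gaussTerm {B : Type*} [Ring B] [Algebra ℚ B] (c : B) (n : ℕ) : B :=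
  if Even n then ((2 : ℚ) ^ (n / 2) * ((n / 2).factorial : ℚ))⁻¹ • c ^ (n / 2) else 0

theorem succ_smul_gaussTerm {B : Type*} [Ring B] [Algebra ℚ B] (c : B) (n : ℕ) :
    ((n + 2 : ℕ) : ℚ) • gaussTerm c (n + 2) = c * gaussTerm c n := by
  rcases Nat.even_or_odd' n with ⟨k, rfl | rfl⟩
  · have h1 : (2 * k + 2) / 2 = k + 1 := by omega
    have h2 : 2 * k / 2 = k := by omega
    rw [gaussTerm, gaussTerm, if_pos (by simp [Nat.even_add]), if_pos (by simp), h1, h2, smul_smul,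
      mul_smul_comm, pow_succ' c, Nat.factorial_succ]
    congr 1
    push_cast
    field_simp
    ring
  · simp [gaussTerm, Nat.even_add]

/-- Recursion satisfied by the coefficients of `exp (t x) * exp (t y)`. -/
theorem cauchyProd_expTerm_rec {B : Type*} [Ring B] [Algebra ℚ B] {x y c : B}
    (hc : x * y - y * x = c) (hx : Commute c x) (n : ℕ) :
    ((n + 2 : ℕ) : ℚ) • cauchyProd (expTerm x) (expTerm y) (n + 2) =
      (x + y) * cauchyProd (expTerm x) (expTerm y) (n + 1) +
        c * cauchyProd (expTerm x) (expTerm y) n := by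
  have comm : cauchyProd (expTerm x) (expTerm y) (n + 1) * y -
      y * cauchyProd (expTerm x) (expTerm y) (n + 1) =
        c * cauchyProd (expTerm x) (expTerm y) n := by
    have e : cauchyProd (expTerm x) (expTerm y) (n + 1) * y -
        y * cauchyProd (expTerm x) (expTerm y) (n + 1) =
        ∑ p ∈ antidiagonal (n + 1), (expTerm x p.1 * y - y * expTerm x p.1) * expTerm y p.2 := by
      rw [cauchyProd, sum_mul, mul_sum, ← sum_sub_distrib]
      refine sum_congr rfl fun p _ => ?_
      have : expTerm y p.2 * y = y * expTerm y p.2 := by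
        rw [← succ_smul_expTerm, succ_smul_expTerm_mul]
      rw [mul_assoc, this]
      noncomm_ring
    rw [e, Nat.sum_antidiagonal_succ, cauchyProd, mul_sum]
    simp only [expTerm_succ_mul_sub hc hx, mul_assoc]
    simp [expTerm]
  rw [succ_smul_cauchyProd, ← comm]
  simp only [succ_smul_expTerm x, succ_smul_expTerm_mul y]
  have h1 : cauchyProd (fun i => x * expTerm x i) (expTerm y) (n + 1) =
      x * cauchyProd (expTerm x) (expTerm y) (n + 1) := by
    simp [cauchyProd, mul_sum, mul_assoc]
  have h2 : cauchyProd (expTerm x) (fun i => expTerm y i * y) (n + 1) =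
      cauchyProd (expTerm x) (expTerm y) (n + 1) * y := by
    simp [cauchyProd, sum_mul, mul_assoc]
  rw [h1, h2]
  noncomm_ring

/-- Recursion satisfied by the coefficients of `exp (c t² / 2) * exp (t z)`. -/
theorem cauchyProd_gaussTerm_rec {B : Type*} [Ring B] [Algebra ℚ B] {z c : B}
    (hz : Commute c z) (n : ℕ) :
    ((n + 2 : ℕ) : ℚ) • cauchyProd (gaussTerm c) (expTerm z) (n + 2) =
      z * cauchyProd (gaussTerm c) (expTerm z) (n + 1) +
        c * cauchyProd (gaussTerm c) (expTerm z) n := by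
  have hg : ∀ k, Commute (gaussTerm c k) z := by
    intro k
    unfold gaussTerm
    split_ifs
    · exact (hz.pow_left _).smul_left _
    · exact Commute.zero_left _
  rw [succ_smul_cauchyProd, add_comm]
  simp only [succ_smul_expTerm]
  congr 1
  · simp only [cauchyProd, mul_sum, ← mul_assoc, (hg _).eq]
  · rw [cauchyProd, Nat.sum_antidiagonal_succ, cauchyProd, mul_sum]
    simp only [add_assoc, Nat.reduceAdd, succ_smul_gaussTerm, mul_assoc]
    simp [gaussTerm]

/-- The Baker–Campbell–Hausdorff formula for a central commutator, in each degree. -/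
theorem cauchyProd_expTerm_eq {B : Type*} [Ring B] [Algebra ℚ B] {x y c : B}
    (hc : x * y - y * x = c) (hx : Commute c x) (hy : Commute c y) (n : ℕ) :
    cauchyProd (expTerm x) (expTerm y) n = cauchyProd (gaussTerm c) (expTerm (x + y)) n := by
  induction n using Nat.twoStepInduction with
  | zero => simp [cauchyProd, expTerm, gaussTerm]
  | one => simp [cauchyProd, expTerm, gaussTerm, Nat.antidiagonal_succ, add_comm]
  | more n h0 h1 =>
    have hn : ((n + 2 : ℕ) : ℚ) ≠ 0 := by positivity
    apply smul_right_injective B hn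
    simp only [cauchyProd_expTerm_rec hc hx, cauchyProd_gaussTerm_rec (hx.add_right hy), h0, h1]

/-- Expansion of a power of a sum of monomials with noncommuting coefficients. -/
theorem sum_single_pow {A T N : Type*} [Ring A] [Fintype T] [AddCommMonoid N]
    (g : T → N) (a : T → A) (k : ℕ) :
    (∑ x, single (g x) (a x)) ^ k =
      ∑ f : Fin k → T, single (∑ r, g (f r)) (List.ofFn fun r => a (f r)).prod := by
  induction k with
  | zero => simp [one_def]
  | succ k ih =>
    rw [pow_succ', ih, sum_mul_sum, ← (Fin.consEquiv fun _ => T).sum_comp, Fintype.sum_prod_type]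
    simp [single_mul_single, Fin.sum_univ_succ, Fin.consEquiv]

theorem sum_singleton_eq_ofFn {T : Type*} {k : ℕ} (f : Fin k → T) :
    ∑ r, ({f r} : Multiset T) = (List.ofFn f : Multiset T) := by
  induction k with
  | zero => simp
  | succ k ih => rw [Fin.sum_univ_succ, ih, List.ofFn_succ, Multiset.singleton_add,
      Multiset.cons_coe]

/-- Squarefree coefficients of a power of a generic linear form are symmetrized products. -/
theorem coeff_linear_pow {A T : Type*} [Ring A] [Algebra ℚ A] [Fintype T]
    (a : T → A) (k : ℕ) (s : List T) (hs : s.Nodup) :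
    ((∑ x, single ({x} : Multiset T) (a x)) ^ k).coeff (s : Multiset T) =
      if s.length = k then (k.factorial : ℚ) • symP (s.map a) else 0 := by
  classical
  rw [sum_single_pow, coeff_sum, Finsupp.finsetSum_apply]
  simp only [coeff_single, Finsupp.single_apply, sum_singleton_eq_ofFn, Multiset.coe_eq_coe]
  split_ifs with hk
  · subst hk
    rw [symP, List.length_map, smul_smul, mul_inv_cancel₀ (by positivity), one_smul,
      ← List.map_permutations, List.map_map, ← List.sum_toFinset _ (List.nodup_permutations s hs),
      ← sum_filter]
    refine sum_bij (fun f _ => List.ofFn f) ?_ ?_ ?_ ?_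
    · intro f hf
      simpa using hf
    · intro f _ g _ h
      exact List.ofFn_injective h
    · intro t ht
      have ht' : t.Perm s := by simpa using ht
      have ofFn_eq : List.ofFn (fun r => t.get (r.cast ht'.length_eq.symm)) = t :=
        List.ext_get (by simp [ht'.length_eq]) (by simp)
      exact ⟨_, by rw [mem_filter, ofFn_eq]; exact ⟨mem_univ _, ht'⟩, ofFn_eq⟩
    · intro f _
      simp [List.map_ofFn, Function.comp_def]
  · refine sum_eq_zero fun f _ => if_neg fun h => hk ?_
    simpa using h.length_eq.symm

/-- Squarefree coefficients of a product. -/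
theorem coeff_mul_univ {A ι κ : Type*} [Ring A] [Fintype ι] [Fintype κ] [DecidableEq ι]
    [DecidableEq κ] (U V : AddMonoidAlgebra A (Multiset (ι ⊕ κ))) :
    (U * V).coeff (univ : Finset (ι ⊕ κ)).val =
      ∑ I : Finset ι, ∑ J : Finset κ,
        U.coeff (I.disjSum J).val * V.coeff (Iᶜ.disjSum Jᶜ).val := by
  have compl_eq : ∀ (I : Finset ι) (J : Finset κ), (I.disjSum J)ᶜ = Iᶜ.disjSum Jᶜ := by
    intro I J
    ext (x | x) <;> simp
  have hinj : Function.Injective fun T : Finset (ι ⊕ κ) => (T.val, Tᶜ.val) := by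
    intro S T h
    exact Finset.val_injective (congrArg Prod.fst h)
  rw [coeff_mul_antidiag U V _ (univ.map ⟨_, hinj⟩), sum_map,
    ← (Finset.sumEquiv (α := ι) (β := κ)).symm.toEquiv.sum_comp, Fintype.sum_prod_type]
  · simp [compl_eq]
  · rintro ⟨p, q⟩
    simp only [mem_map, mem_univ, true_and, Function.Embedding.coeFn_mk, Prod.mk.injEq]
    constructor
    · rintro ⟨T, rfl, rfl⟩
      rw [← disjUnion_val _ _ disjoint_compl_right, disjUnion_eq_union, union_compl]
    · intro h
      have hnd : (p + q).Nodup := h ▸ univ.nodup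
      obtain ⟨hp, hq, hd⟩ := Multiset.nodup_add.mp hnd
      refine ⟨⟨p, hp⟩, rfl, ?_⟩
      refine (Multiset.Nodup.ext (Finset.nodup _) hq).mpr fun x => ?_
      have hx : x ∈ p + q := h ▸ mem_univ x
      rw [Multiset.mem_add] at hx
      rw [mem_val, mem_compl, ← mem_val]
      exact ⟨hx.resolve_left, fun h1 h2 => Multiset.disjoint_left.mp hd h2 h1⟩

theorem disjSum_val_eq_iff {ι κ : Type*} {s : Multiset ι} {t : Multiset κ} {I : Finset ι}
    {J : Finset κ} :
    s.map Sum.inl + t.map Sum.inr = (I.disjSum J).val ↔ s = I.val ∧ t = J.val := by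
  constructor
  · intro h
    have hl := congrArg (Multiset.filterMap Sum.getLeft?) h
    have hr := congrArg (Multiset.filterMap Sum.getRight?) h
    have getLeft_inr : ∀ u : Multiset κ, u.filterMap (fun _ => (none : Option ι)) = 0 := fun u => by
      induction u using Multiset.induction <;> simp [*]
    have getRight_inl : ∀ u : Multiset ι, u.filterMap (fun _ => (none : Option κ)) = 0 := fun u => by
      induction u using Multiset.induction <;> simp [*]
    simp [Finset.val_disjSum, Multiset.disjSum, Multiset.filterMap_map, Function.comp_def,
      getLeft_inr, getRight_inl] at hl hr
    exact ⟨hl, hr⟩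
  · rintro ⟨rfl, rfl⟩
    rfl

/-- The enumerations of a finite set are the reorderings of a fixed one. -/
theorem sum_enumerations {ι R : Type*} [AddCommMonoid R] [Fintype ι] [DecidableEq ι] {h : ℕ}
    {I : Finset ι} (e : Fin h ≃ I) (φ : (Fin h → ι) → R) :
    ∑ f : Fin h → ι with (List.ofFn f : Multiset ι) = I.val, φ f =
      ∑ σ : Equiv.Perm (Fin h), φ fun r => e (σ r) := by
  symm
  refine sum_bij (fun σ _ r => (e (σ r) : ι)) ?_ ?_ ?_ fun _ _ => rfl
  · intro σ _
    rw [mem_filter]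
    refine ⟨mem_univ _, (Multiset.Nodup.ext ?_ I.nodup).mpr fun x => ?_⟩
    · rw [Multiset.coe_nodup, List.nodup_ofFn]
      exact Subtype.val_injective.comp (e.injective.comp σ.injective)
    · rw [Multiset.mem_coe, List.mem_ofFn', mem_val]
      constructor
      · rintro ⟨r, rfl⟩
        exact (e (σ r)).2
      · intro hx
        exact ⟨σ.symm (e.symm ⟨x, hx⟩), by simp⟩
  · intro σ _ τ _ hστ
    ext1 r
    exact e.injective (Subtype.val_injective (congrFun hστ r))
  · intro f hf
    have hf' := (mem_filter.mp hf).2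
    have hmem : ∀ r, f r ∈ I := fun r => by
      rw [← mem_val, ← hf', Multiset.mem_coe, List.mem_ofFn']
      exact ⟨r, rfl⟩
    have hinj : Function.Injective f := by
      rw [← List.nodup_ofFn, ← Multiset.coe_nodup, hf']
      exact I.nodup
    have hinj' : Function.Injective fun r => e.symm ⟨f r, hmem r⟩ := fun r s hrs =>
      hinj (congrArg Subtype.val (e.symm.injective hrs))
    exact ⟨Equiv.ofBijective _ (Finite.injective_iff_bijective.mp hinj'), mem_univ _, by simp⟩

/-- Squarefree coefficients of a power of a generic bilinear form, as sums over enumerations. -/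
theorem coeff_bilinear_pow {A ι κ : Type*} [Ring A] [Algebra ℚ A] [Fintype ι] [Fintype κ]
    [DecidableEq ι] [DecidableEq κ] (d : ι → κ → ℚ) (h : ℕ) (I : Finset ι) (J : Finset κ) :
    ((∑ p : ι × κ, single ({Sum.inl p.1} + {Sum.inr p.2} : Multiset (ι ⊕ κ))
      (d p.1 p.2 • (1 : A))) ^ h).coeff (I.disjSum J).val =
      (∑ f : Fin h → ι with (List.ofFn f : Multiset ι) = I.val,
        ∑ g : Fin h → κ with (List.ofFn g : Multiset κ) = J.val,
          ∏ r, d (f r) (g r)) • (1 : A) := by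
  have prod_eq : ∀ (f : Fin h → ι) (g : Fin h → κ),
      (List.ofFn fun r => d (f r) (g r) • (1 : A)).prod = (∏ r, d (f r) (g r)) • (1 : A) := by
    intro f g
    simp only [← Algebra.algebraMap_eq_smul_one, ← List.prod_ofFn, map_list_prod, List.map_ofFn,
      Function.comp_def]
  have cond : ∀ (f : Fin h → ι) (g : Fin h → κ),
      (∑ r, ({Sum.inl (f r)} + {Sum.inr (g r)} : Multiset (ι ⊕ κ)) = (I.disjSum J).val) ↔
        (List.ofFn f : Multiset ι) = I.val ∧ (List.ofFn g : Multiset κ) = J.val := by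
    intro f g
    rw [← disjSum_val_eq_iff, sum_add_distrib, sum_singleton_eq_ofFn, sum_singleton_eq_ofFn,
      Multiset.map_coe, Multiset.map_coe, List.map_ofFn, List.map_ofFn]
    rfl
  rw [sum_single_pow, coeff_sum, Finsupp.finsetSum_apply,
    ← (Equiv.arrowProdEquivProdArrow (Fin h) (fun _ => ι) (fun _ => κ)).symm.sum_comp,
    Fintype.sum_prod_type, sum_smul, sum_filter]
  refine sum_congr rfl fun f _ => ?_
  rw [sum_smul, sum_filter]
  trans ∑ g : Fin h → κ, if (List.ofFn f : Multiset ι) = I.val then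
      if (List.ofFn g : Multiset κ) = J.val then (∏ r, d (f r) (g r)) • (1 : A) else 0 else 0
  swap
  · split_ifs <;> simp
  refine sum_congr rfl fun g _ => ?_
  rw [coeff_single, Finsupp.single_apply, ← ite_and]
  exact if_congr (cond f g) (prod_eq f g) rfl

theorem sum_perm_perm_prod {α β : Type*} (d : α → β → ℚ) {h : ℕ} (e : Fin h → α)
    (e' : Fin h → β) :
    ∑ σ : Equiv.Perm (Fin h), ∑ τ : Equiv.Perm (Fin h), ∏ r, d (e (σ r)) (e' (τ r)) =
      (h.factorial : ℚ) * ∑ π : Equiv.Perm (Fin h), ∏ r, d (e r) (e' (π r)) := by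
  have inner : ∀ σ : Equiv.Perm (Fin h), ∑ τ : Equiv.Perm (Fin h), ∏ r, d (e (σ r)) (e' (τ r)) =
      ∑ π : Equiv.Perm (Fin h), ∏ r, d (e r) (e' (π r)) := by
    intro σ
    rw [← Equiv.sum_comp (Equiv.mulRight σ)]
    refine sum_congr rfl fun π _ => ?_
    exact Equiv.prod_comp σ fun r => d (e r) (e' (π r))
  simp [inner, Fintype.card_perm]

/-- The coefficients of `exp (c t² / 2)` for a generic bilinear form `c` are permanents. -/
theorem coeff_gaussTerm {A ι κ : Type*} [Ring A] [Algebra ℚ A] [Fintype ι] [Fintype κ]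
    [DecidableEq ι] [DecidableEq κ] (d : ι → κ → ℚ) {h : ℕ} {I : Finset ι} {J : Finset κ}
    (e : Fin h ≃ I) (e' : Fin h ≃ J) (n : ℕ) :
    (gaussTerm (∑ p : ι × κ, single ({Sum.inl p.1} + {Sum.inr p.2} : Multiset (ι ⊕ κ))
      (d p.1 p.2 • (1 : A))) n).coeff (I.disjSum J).val =
      if n = 2 * h then
        (((2 : ℚ) ^ h)⁻¹ * ∑ π : Equiv.Perm (Fin h), ∏ r, d (e r) (e' (π r))) • (1 : A)
      else 0 := by
  unfold gaussTerm
  split_ifs with heven hn hn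
  · subst hn
    have h2 : 2 * h / 2 = h := by omega
    rw [h2, coeff_smul_apply, coeff_bilinear_pow, sum_enumerations e]
    simp only [sum_enumerations e']
    rw [sum_perm_perm_prod d (fun r => (e r : ι)) (fun r => (e' r : κ)), smul_smul]
    congr 1
    field_simp
  · rw [coeff_smul_apply, coeff_bilinear_pow, filter_false_of_mem, sum_empty, zero_smul, smul_zero]
    intro f _ hf
    have h1 := congrArg Multiset.card hf
    have h2 := Fintype.card_congr e
    simp at h1 h2
    obtain ⟨k, rfl⟩ := heven
    omega
  · exact absurd (hn ▸ even_two_mul h) heven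
  · simp

theorem coeff_gaussTerm_of_card_ne {A ι κ : Type*} [Ring A] [Algebra ℚ A] [Fintype ι] [Fintype κ]
    [DecidableEq ι] [DecidableEq κ] (d : ι → κ → ℚ) {I : Finset ι} {J : Finset κ}
    (hIJ : I.card ≠ J.card) (n : ℕ) :
    (gaussTerm (∑ p : ι × κ, single ({Sum.inl p.1} + {Sum.inr p.2} : Multiset (ι ⊕ κ))
      (d p.1 p.2 • (1 : A))) n).coeff (I.disjSum J).val = 0 := by
  unfold gaussTerm
  split_ifs
  · rw [coeff_smul_apply, coeff_bilinear_pow, sum_eq_zero, zero_smul, smul_zero]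
    intro f hf
    rw [filter_false_of_mem, sum_empty]
    intro g _ hg
    have h1 := congrArg Multiset.card (mem_filter.mp hf).2
    have h2 := congrArg Multiset.card hg
    simp at h1 h2
    omega
  · simp

theorem coeff_expTerm_disjSum {A ι κ : Type*} [Ring A] [Algebra ℚ A] [Fintype ι] [Fintype κ]
    [LinearOrder ι] [LinearOrder κ] (u : ι → A) (v : κ → A) (k : ℕ) (I : Finset ι)
    (J : Finset κ) :
    (expTerm (∑ x : ι ⊕ κ, single ({x} : Multiset (ι ⊕ κ)) (Sum.elim u v x)) k).coeff
      (I.disjSum J).val =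
      if I.card + J.card = k then symP ((I.sort (· ≤ ·)).map u ++ (J.sort (· ≤ ·)).map v)
      else 0 := by
  have val_eq : (I.disjSum J).val =
      (((I.sort (· ≤ ·)).map Sum.inl ++ (J.sort (· ≤ ·)).map Sum.inr : List (ι ⊕ κ)) :
        Multiset (ι ⊕ κ)) := by
    rw [Finset.val_disjSum, Multiset.disjSum, ← Multiset.coe_add, ← Multiset.map_coe,
      ← Multiset.map_coe, Finset.sort_eq, Finset.sort_eq]
  have nodup : ((I.sort (· ≤ ·)).map Sum.inl ++ (J.sort (· ≤ ·)).map Sum.inr :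
      List (ι ⊕ κ)).Nodup := by
    rw [← Multiset.coe_nodup, ← val_eq]
    exact Finset.nodup _
  rw [expTerm, coeff_smul_apply, val_eq, coeff_linear_pow _ _ _ nodup]
  simp only [List.length_append, List.length_map, length_sort, List.map_append, List.map_map,
    Sum.elim_comp_inl, Sum.elim_comp_inr]
  split_ifs
  · rw [smul_smul, inv_mul_cancel₀ (by positivity), one_smul]
  · rw [smul_zero]

theorem symP_eq_zero {A : Type*} [Ring A] [Algebra ℚ A] {s : List A} (hs : 0 ∈ s) :
    symP s = 0 := by
  rw [symP, List.sum_eq_zero, smul_zero]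
  intro x hx
  obtain ⟨t, ht, rfl⟩ := List.mem_map.mp hx
  exact List.prod_eq_zero ((List.mem_permutations.mp ht).mem_iff.mpr hs)

/-- Coefficient of the product of the exponentials of two generic linear forms. -/
theorem coeff_cauchyProd_expTerm {A : Type*} [Ring A] [Algebra ℚ A] {l m : ℕ}
    (L : Fin l → A) (M : Fin m → A) :
    (cauchyProd (expTerm (∑ x, single ({x} : Multiset (Fin l ⊕ Fin m)) (Sum.elim L 0 x)))
      (expTerm (∑ x, single ({x} : Multiset (Fin l ⊕ Fin m)) (Sum.elim 0 M x)))
      (l + m)).coeff (univ : Finset (Fin l ⊕ Fin m)).val =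
      symP (List.ofFn L) * symP (List.ofFn M) := by
  have key : ∀ i j,
      (expTerm (∑ x, single ({x} : Multiset (Fin l ⊕ Fin m)) (Sum.elim L 0 x)) i *
        expTerm (∑ x, single ({x} : Multiset (Fin l ⊕ Fin m)) (Sum.elim 0 M x)) j).coeff
          (univ : Finset (Fin l ⊕ Fin m)).val =
        (if l = i then symP (List.ofFn L) else 0) * (if m = j then symP (List.ofFn M) else 0) := by
    intro i j
    rw [coeff_mul_univ, sum_eq_single univ, sum_eq_single ∅]
    · rw [coeff_expTerm_disjSum, coeff_expTerm_disjSum, compl_univ, compl_empty, Fin.sort_univ,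
        Fin.sort_univ]
      simp [List.ofFn_eq_map]
    · intro J _ hJ
      obtain ⟨y, hy⟩ := nonempty_iff_ne_empty.mpr hJ
      rw [coeff_expTerm_disjSum, symP_eq_zero, ite_self, zero_mul]
      exact List.mem_append_right _ (List.mem_map.mpr ⟨y, by simpa using hy, rfl⟩)
    · simp
    · intro I _ hI
      obtain ⟨x, hx⟩ := nonempty_iff_ne_empty.mpr (mt (compl_eq_empty_iff I).mp hI)
      refine sum_eq_zero fun J _ => ?_
      rw [coeff_expTerm_disjSum _ M, symP_eq_zero, ite_self, mul_zero]
      exact List.mem_append_left _ (List.mem_map.mpr ⟨x, (mem_sort _).mpr hx, rfl⟩)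
    · simp
  rw [cauchyProd, coeff_sum, Finsupp.finsetSum_apply, sum_eq_single (l, m)]
  · rw [key, if_pos rfl, if_pos rfl]
  · rintro ⟨i, j⟩ hij hne
    rw [key]
    have : ¬(l = i ∧ m = j) := fun h => hne (by rw [h.1, h.2])
    rw [ite_zero_mul_ite_zero, if_neg this]
  · simp

/-- Sum over pairs of subsets of equal size, grouped by size. -/
theorem sum_powersetCard_pairs {A : Type*} [AddCommMonoid A] {l m : ℕ}
    (F : Finset (Fin l) → Finset (Fin m) → A) :
    ∑ h ∈ range (min l m + 1), ∑ I ∈ powersetCard h univ, ∑ J ∈ powersetCard h univ, F I J =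
      ∑ I, ∑ J, if I.card = J.card then F I J else 0 := by
  have e : ∀ h, ∑ I ∈ powersetCard h univ, ∑ J ∈ powersetCard h univ, F I J =
      ∑ I, ∑ J, if I.card = h ∧ J.card = h then F I J else 0 := by
    intro h
    simp only [powersetCard_eq_filter, powerset_univ, sum_filter, ite_and]
    refine sum_congr rfl fun I _ => ?_
    split_ifs <;> simp
  simp only [e]
  rw [sum_comm]
  refine sum_congr rfl fun I _ => ?_
  rw [sum_comm]
  refine sum_congr rfl fun J _ => ?_
  have hI := card_le_univ I
  have hJ := card_le_univ J
  simp only [Fintype.card_fin] at hI hJ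
  rw [sum_eq_single I.card]
  · simp [eq_comm]
  · intro h _ hh
    rw [if_neg fun hc => hh hc.1.symm]
  · intro hn
    rw [if_neg]
    rintro ⟨-, hc⟩
    exact hn (mem_range.mpr (by omega))

/-- Coefficient of `exp (c / 2) * exp z` for a generic bilinear form `c` and linear form `z`. -/
theorem coeff_cauchyProd_gaussTerm {A : Type*} [Ring A] [Algebra ℚ A] {l m : ℕ}
    (L : Fin l → A) (M : Fin m → A) (d : Fin l → Fin m → ℚ) :
    (cauchyProd (gaussTerm (∑ p : Fin l × Fin m,
        single ({Sum.inl p.1} + {Sum.inr p.2} : Multiset (Fin l ⊕ Fin m)) (d p.1 p.2 • (1 : A))))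
      (expTerm (∑ x, single ({x} : Multiset (Fin l ⊕ Fin m)) (Sum.elim L M x)))
      (l + m)).coeff (univ : Finset (Fin l ⊕ Fin m)).val =
      ∑ I : Finset (Fin l), ∑ J : Finset (Fin m), if hIJ : I.card = J.card then
        (((2 : ℚ) ^ J.card)⁻¹ * ∑ π : Equiv.Perm (Fin J.card),
          ∏ r, d (I.orderIsoOfFin hIJ r) (J.orderIsoOfFin rfl (π r))) •
            symP ((Iᶜ.sort (· ≤ ·)).map L ++ (Jᶜ.sort (· ≤ ·)).map M)
        else 0 := by
  rw [cauchyProd, coeff_sum, Finsupp.finsetSum_apply]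
  simp only [coeff_mul_univ]
  rw [sum_comm]
  refine sum_congr rfl fun I _ => ?_
  rw [sum_comm]
  refine sum_congr rfl fun J _ => ?_
  split_ifs with hIJ
  · have hI := card_le_univ I
    have hJ := card_le_univ J
    simp only [Fintype.card_fin] at hI hJ
    simp only [coeff_gaussTerm d (I.orderIsoOfFin hIJ).toEquiv (J.orderIsoOfFin rfl).toEquiv,
      coeff_expTerm_disjSum, card_compl, Fintype.card_fin]
    rw [sum_eq_single (2 * J.card, l - I.card + (m - J.card))]
    · simp
    · rintro ⟨i, j⟩ _ hne
      rw [ite_zero_mul_ite_zero, if_neg]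
      rintro ⟨rfl, rfl⟩
      exact hne rfl
    · intro hn
      exact absurd (HasAntidiagonal.mem_antidiagonal.mpr (by simp only; omega)) hn
  · refine sum_eq_zero fun p _ => ?_
    rw [coeff_gaussTerm_of_card_ne d hIJ, zero_mul]

theorem sum_single_elim_commutator {A : Type*} [Ring A] [Algebra ℚ A] {ι κ : Type*} [Fintype ι]
    [Fintype κ] (L : ι → A) (M : κ → A) (d : ι → κ → ℚ)
    (hd : ∀ i j, L i * M j - M j * L i = d i j • (1 : A)) :
    (∑ x, single ({x} : Multiset (ι ⊕ κ)) (Sum.elim L 0 x)) *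
        (∑ x, single ({x} : Multiset (ι ⊕ κ)) (Sum.elim 0 M x)) -
      (∑ x, single ({x} : Multiset (ι ⊕ κ)) (Sum.elim 0 M x)) *
        (∑ x, single ({x} : Multiset (ι ⊕ κ)) (Sum.elim L 0 x)) =
      ∑ p : ι × κ, single ({Sum.inl p.1} + {Sum.inr p.2} : Multiset (ι ⊕ κ))
        (d p.1 p.2 • (1 : A)) := by
  simp only [Fintype.sum_sum_type, Sum.elim_inl, Sum.elim_inr, Pi.zero_apply, single_zero,
    sum_const_zero, add_zero, zero_add, Fintype.sum_prod_type, ← hd]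
  rw [sum_mul_sum, sum_mul_sum, sum_comm (s := (univ : Finset κ)), ← sum_sub_distrib]
  refine sum_congr rfl fun i _ => ?_
  rw [← sum_sub_distrib]
  refine sum_congr rfl fun j _ => ?_
  rw [single_mul_single, single_mul_single, add_comm {Sum.inr j}, single_sub]

theorem commute_bilinear_linear {A : Type*} [Ring A] [Algebra ℚ A] {ι κ : Type*} [Fintype ι]
    [Fintype κ] (d : ι → κ → ℚ) (a : ι ⊕ κ → A) :
    Commute (∑ p : ι × κ, single ({Sum.inl p.1} + {Sum.inr p.2} : Multiset (ι ⊕ κ))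
        (d p.1 p.2 • (1 : A)))
      (∑ x, single ({x} : Multiset (ι ⊕ κ)) (a x)) :=
  Commute.sum_left _ _ _ fun _ _ => Commute.sum_right _ _ _ fun _ _ =>
    single_commute_single (AddCommute.all _ _) ((Commute.one_left _).smul_left _)

open Finset in
theorem stmt9 {A : Type*} [Ring A] [Algebra ℚ A] {l m : ℕ}
    (L : Fin l → A) (M : Fin m → A) (d : Fin l → Fin m → ℚ)
    (hd : ∀ i j, brk (L i) (M j) = d i j • (1 : A)) :
    symP (List.ofFn L) * symP (List.ofFn M)
      = ∑ h ∈ Finset.range (min l m + 1),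
          ∑ I ∈ (Finset.powersetCard h (Finset.univ : Finset (Fin l))).attach,
            ∑ J ∈ (Finset.powersetCard h (Finset.univ : Finset (Fin m))).attach,
              ∑ π : Equiv.Perm (Fin h),
                (((2 : ℚ) ^ h)⁻¹ *
                    ∏ r : Fin h,
                      d (I.1.orderIsoOfFin (Finset.mem_powersetCard.mp I.2).2 r)
                        (J.1.orderIsoOfFin (Finset.mem_powersetCard.mp J.2).2 (π r))) •
                  symP ((I.1ᶜ.sort (· ≤ ·)).map L ++ (J.1ᶜ.sort (· ≤ ·)).map M) := by
  have bch := cauchyProd_expTerm_eq (sum_single_elim_commutator L M d hd)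
    (commute_bilinear_linear d _) (commute_bilinear_linear d _) (l + m)
  rw [← sum_add_distrib] at bch
  simp only [← single_add, ← Pi.add_apply, ← Sum.elim_add_add, add_zero, zero_add] at bch
  rw [← coeff_cauchyProd_expTerm, bch, coeff_cauchyProd_gaussTerm]
  let F : Finset (Fin l) → Finset (Fin m) → A := fun I J =>
    if hIJ : I.card = J.card then
      (((2 : ℚ) ^ J.card)⁻¹ * ∑ π : Equiv.Perm (Fin J.card),
        ∏ r, d (I.orderIsoOfFin hIJ r) (J.orderIsoOfFin rfl (π r))) •
          symP ((Iᶜ.sort (· ≤ ·)).map L ++ (Jᶜ.sort (· ≤ ·)).map M)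
      else 0
  have hF : ∀ I J, (if I.card = J.card then F I J else 0) = F I J := by
    intro I J
    split_ifs with hIJ
    · rfl
    · simp only [F, dif_neg hIJ]
  have grouped := sum_powersetCard_pairs F
  simp only [hF] at grouped
  rw [← grouped]
  refine sum_congr rfl fun h _ => ?_
  rw [← sum_attach]
  refine sum_congr rfl fun I _ => ?_
  rw [← sum_attach]
  refine sum_congr rfl fun J _ => ?_
  obtain ⟨I, hI⟩ := I
  obtain ⟨J, hJ⟩ := J
  obtain rfl := (mem_powersetCard.mp hJ).2
  simp only [F, dif_pos (mem_powersetCard.mp hI).2, mul_sum, sum_smul]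
end

section
/- Under the hypotheses [L_i, M_j] = d_{ij}·1 (scalars), the commutator of two symmetrized products is [Sym_l(L₁,…,L_l), Sym_m(M₁,…,M_m)] = Σ_{h odd, 1≤h≤min(l,m)} Σ_{I,J,π} 2^{1−h} d_{i₁ j_{π(1)}}⋯d_{i_h j_{π(h)}} Sym_{l+m−2h}(remaining L's and M's). In particular, only odd-order contractions contribute. -/
open Finset

section Orderings

variable {α : Type*} [DecidableEq α]

/-- The finite set of all lists enumerating a finset without repetition. -/
noncomputable def orderings (S : Finset α) : Finset (List α) := S.toList.permutations.toFinset

lemma mem_orderings {S : Finset α} {p : List α} :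
    p ∈ orderings S ↔ p.Nodup ∧ p.toFinset = S := by
  rw [orderings, List.mem_toFinset, List.mem_permutations]
  constructor
  · intro h
    exact ⟨h.nodup_iff.2 S.nodup_toList, by rw [List.toFinset_eq_of_perm _ _ h, toList_toFinset]⟩
  · rintro ⟨h, rfl⟩
    exact (List.toFinset_toList h).symm

lemma card_orderings (S : Finset α) : #(orderings S) = (#S).factorial := by
  rw [orderings, List.toFinset_card_of_nodup (List.nodup_permutations _ S.nodup_toList),
    List.length_permutations, length_toList]

lemma orderings_empty : orderings (∅ : Finset α) = {[]} := by
  simp [orderings]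

lemma length_of_mem_orderings {S : Finset α} {p : List α} (hp : p ∈ orderings S) :
    p.length = #S := by
  obtain ⟨h, rfl⟩ := mem_orderings.1 hp
  exact (List.toFinset_card_of_nodup h).symm

/-- Sums over orderings of a nonempty finset split according to the first entry. -/
lemma sum_orderings {M : Type*} [AddCommMonoid M] {S : Finset α} (hS : S.Nonempty)
    (F : List α → M) :
    ∑ p ∈ orderings S, F p = ∑ i ∈ S, ∑ p ∈ orderings (S.erase i), F (i :: p) := by
  rw [sum_sigma']
  symm
  refine sum_bij (fun x _ => x.1 :: x.2) ?_ ?_ ?_ (fun _ _ => rfl)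
  · rintro ⟨i, p⟩ h
    simp only [mem_sigma, mem_orderings] at h
    obtain ⟨hi, hp, hpS⟩ := h
    have hip : i ∉ p := fun h' => by
      have := List.mem_toFinset.2 h'
      simp [hpS] at this
    rw [mem_orderings]
    exact ⟨List.nodup_cons.2 ⟨hip, hp⟩, by rw [List.toFinset_cons, hpS, insert_erase hi]⟩
  · rintro ⟨i, p⟩ - ⟨j, q⟩ - h
    simp only [List.cons.injEq] at h
    obtain ⟨rfl, rfl⟩ := h
    rfl
  · intro p hp
    obtain ⟨hnd, rfl⟩ := mem_orderings.1 hp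
    cases p with
    | nil => simp at hS
    | cons i p =>
      refine ⟨⟨i, p⟩, ?_, rfl⟩
      rw [List.nodup_cons] at hnd
      simp only [mem_sigma, mem_orderings]
      refine ⟨by simp, hnd.2, ?_⟩
      rw [List.toFinset_cons, erase_insert (by simpa using hnd.1)]

/-- Orderings are parametrized by permutations, given one enumeration. -/
lemma sum_orderings_eq_sum_perm {M : Type*} [AddCommMonoid M] {S : Finset α} {h : ℕ}
    (e : Fin h → α) (he : Function.Injective e) (heS : univ.image e = S) (F : List α → M) :
    ∑ p ∈ orderings S, F p = ∑ σ : Equiv.Perm (Fin h), F (List.ofFn (e ∘ σ)) := by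
  have hinj : Function.Injective (fun σ : Equiv.Perm (Fin h) => List.ofFn (e ∘ σ)) := by
    intro σ τ hst
    have := List.ofFn_injective hst
    ext x
    rw [he (congrFun this x)]
  have hcard : #S = h := by rw [← heS, card_image_of_injective _ he, card_univ, Fintype.card_fin]
  have himage : univ.image (fun σ : Equiv.Perm (Fin h) => List.ofFn (e ∘ σ)) = orderings S := by
    refine eq_of_subset_of_card_le ?_ ?_
    · intro p hp
      obtain ⟨σ, -, rfl⟩ := mem_image.1 hp
      rw [mem_orderings]
      refine ⟨List.nodup_ofFn.2 (he.comp σ.injective), ?_⟩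
      rw [← heS]
      ext x
      simp only [List.mem_toFinset, List.mem_ofFn, Function.comp_apply, mem_image, mem_univ,
        true_and]
      exact ⟨fun ⟨r, hr⟩ => ⟨σ r, hr⟩, fun ⟨r, hr⟩ => ⟨σ.symm r, by simpa using hr⟩⟩
    · rw [card_image_of_injective _ hinj, card_orderings, hcard, card_univ, Fintype.card_perm,
        Fintype.card_fin]
  rw [← himage, sum_image (fun _ _ _ _ h => hinj h)]

end Orderings

section SymmetrizedProduct

variable {A : Type*} [Ring A] [Algebra ℚ A] {α β : Type*}

lemma symP_perm {p q : List A} (h : p.Perm q) : symP p = symP q := by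
  rw [symP, symP, h.length_eq, (h.permutations.map _).sum_eq]

lemma symP_nil : symP ([] : List A) = 1 := by
  simp [symP]

lemma symP_map_toList [DecidableEq α] (u : α → A) (S : Finset α) :
    symP (S.toList.map u) =
      ((#S).factorial : ℚ)⁻¹ • ∑ p ∈ orderings S, (p.map u).prod := by
  rw [symP, orderings, List.sum_toFinset _ (List.nodup_permutations _ S.nodup_toList),
    ← List.map_permutations, List.map_map, List.length_map, length_toList]
  rfl

lemma card_smul_symP [DecidableEq α] (u : α → A) (S : Finset α) :
    (#S : ℚ) • symP (S.toList.map u) = ∑ i ∈ S, u i * symP ((S.erase i).toList.map u) := by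
  rcases S.eq_empty_or_nonempty with rfl | hS
  · simp
  have hpos : 0 < #S := hS.card_pos
  have hfac : (#S : ℚ) * ((#S).factorial : ℚ)⁻¹ = ((#S - 1).factorial : ℚ)⁻¹ := by
    rw [← Nat.mul_factorial_pred hpos.ne']
    have : (#S : ℚ) ≠ 0 := by exact_mod_cast hpos.ne'
    push_cast
    field_simp
  rw [symP_map_toList, smul_smul, hfac, sum_orderings hS, smul_sum]
  refine sum_congr rfl fun i hi => ?_
  rw [symP_map_toList, card_erase_of_mem hi, mul_smul_comm, mul_sum]
  simp

/-- The commutator with an element having scalar brackets acts as a derivation. -/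
lemma symP_mul_eq [DecidableEq α] (u : α → A) (y : A) (c : α → ℚ)
    (hc : ∀ i, brk (u i) y = c i • (1 : A)) (S : Finset α) :
    symP (S.toList.map u) * y =
      y * symP (S.toList.map u) + ∑ i ∈ S, c i • symP ((S.erase i).toList.map u) := by
  induction hn : #S generalizing S with
  | zero =>
    rw [card_eq_zero] at hn
    simp [hn, symP_nil]
  | succ n ih =>
    have hne : ((n + 1 : ℕ) : ℚ) ≠ 0 := by exact_mod_cast Nat.succ_ne_zero n
    apply (IsUnit.mk0 _ hne).smul_left_cancel.1
    have hu : ∀ i, u i * y = y * u i + c i • (1 : A) := fun i => by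
      rw [← hc i, brk]; abel
    have hswap : ∑ i ∈ S, ∑ k ∈ S.erase i, c k • (u i * symP (((S.erase i).erase k).toList.map u))
        = ∑ k ∈ S, (n : ℚ) • c k • symP ((S.erase k).toList.map u) := by
      rw [sum_comm' (t' := S) (s' := fun k => S.erase k) (by intro x y; simp; tauto)]
      refine sum_congr rfl fun k hk => ?_
      have hcard : #(S.erase k) = n := by rw [card_erase_of_mem hk, hn, Nat.add_sub_cancel]
      rw [smul_comm, ← hcard, card_smul_symP, smul_sum]
      exact sum_congr rfl fun i _ => by rw [erase_right_comm]
    rw [← smul_mul_assoc, smul_add, ← mul_smul_comm, ← hn, card_smul_symP, sum_mul, mul_sum]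
    calc ∑ i ∈ S, u i * symP ((S.erase i).toList.map u) * y
        = ∑ i ∈ S, (y * (u i * symP ((S.erase i).toList.map u))
            + c i • symP ((S.erase i).toList.map u)
            + ∑ k ∈ S.erase i, c k • (u i * symP (((S.erase i).erase k).toList.map u))) := by
          refine sum_congr rfl fun i hi => ?_
          rw [mul_assoc, ih (S.erase i) (by rw [card_erase_of_mem hi, hn, Nat.add_sub_cancel]),
            mul_add, ← mul_assoc, hu, add_mul, mul_sum, smul_one_mul, mul_assoc]
          simp only [mul_smul_comm]
      _ = _ := by
          rw [sum_add_distrib, sum_add_distrib, hswap, ← smul_sum, hn, add_assoc]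
          congr 1
          push_cast
          rw [add_smul, one_smul, add_comm]

/-- The symmetrized product of two families restricted to finsets of indices. -/
noncomputable def symPair (u : α → A) (v : β → A) (S : Finset α) (T : Finset β) : A :=
  symP (S.toList.map u ++ T.toList.map v)

lemma symPair_comm (u : α → A) (v : β → A) (S : Finset α) (T : Finset β) :
    symPair u v S T = symPair v u T S :=
  symP_perm List.perm_append_comm

lemma symPair_eq_disjSum (u : α → A) (v : β → A) (S : Finset α) (T : Finset β) :
    symPair u v S T = symP ((S.disjSum T).toList.map (Sum.elim u v)) := by
  apply symP_perm
  rw [← Multiset.coe_eq_coe, ← Multiset.coe_add, ← Multiset.map_coe, ← Multiset.map_coe,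
    ← Multiset.map_coe, coe_toList, coe_toList, coe_toList]
  simp [Finset.disjSum, Multiset.disjSum, Multiset.map_map]

lemma card_smul_symPair [DecidableEq α] [DecidableEq β] (u : α → A) (v : β → A)
    (S : Finset α) (T : Finset β) :
    ((#S : ℚ) + #T) • symPair u v S T =
      ∑ i ∈ S, u i * symPair u v (S.erase i) T + ∑ j ∈ T, v j * symPair u v S (T.erase j) := by
  have h := card_smul_symP (Sum.elim u v) (S.disjSum T)
  rw [card_disjSum, sum_disjSum, Nat.cast_add] at h
  simp only [symPair_eq_disjSum, h, Sum.elim_inl, Sum.elim_inr]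
  congr 1 <;> refine sum_congr rfl fun x _ => ?_
  · congr 4
    ext (a | b) <;> simp
  · congr 4
    ext (a | b) <;> simp

end SymmetrizedProduct

section Contractions

variable {α β : Type*} [DecidableEq α] [DecidableEq β]

/-- The weight of all complete contractions between two finsets of indices: the sum of
`∏ d i (e i) / 2` over the bijections `e` between them. -/
noncomputable def contraction (d : α → β → ℚ) (I : Finset α) (J : Finset β) : ℚ :=
  if #I = #J then
    ((2 : ℚ) ^ #I)⁻¹ * ((#I).factorial : ℚ)⁻¹ *
      ∑ p ∈ orderings I, ∑ q ∈ orderings J, (List.zipWith d p q).prod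
  else 0

lemma contraction_empty (d : α → β → ℚ) : contraction d ∅ ∅ = 1 := by
  simp [contraction, orderings_empty]

lemma card_mul_contraction (d : α → β → ℚ) (I : Finset α) (J : Finset β) :
    ((#I : ℚ) + #J) * contraction d I J =
      ∑ i ∈ I, ∑ j ∈ J, d i j * contraction d (I.erase i) (J.erase j) := by
  by_cases hIJ : #I = #J
  · rcases I.eq_empty_or_nonempty with rfl | hI
    · simp [← hIJ]
    have hpos := hI.card_pos
    have hJ : J.Nonempty := card_pos.1 (hIJ ▸ hpos)
    obtain ⟨n, hn⟩ : ∃ n, #I = n + 1 := ⟨#I - 1, by omega⟩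
    have hJn : #J = n + 1 := hIJ ▸ hn
    have hsum : ∑ p ∈ orderings I, ∑ q ∈ orderings J, (List.zipWith d p q).prod =
        ∑ i ∈ I, ∑ j ∈ J, d i j * ∑ p ∈ orderings (I.erase i), ∑ q ∈ orderings (J.erase j),
          (List.zipWith d p q).prod := by
      rw [sum_orderings hI]
      refine sum_congr rfl fun i _ => ?_
      simp_rw [sum_orderings hJ]
      rw [sum_comm]
      simp [mul_sum]
    rw [contraction, if_pos hIJ, hsum, mul_sum, mul_sum]
    refine sum_congr rfl fun i hi => ?_
    rw [mul_sum, mul_sum]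
    refine sum_congr rfl fun j hj => ?_
    have h1 : #(I.erase i) = n := by rw [card_erase_of_mem hi, hn, Nat.add_sub_cancel]
    have h2 : #(J.erase j) = n := by rw [card_erase_of_mem hj, hJn, Nat.add_sub_cancel]
    rw [contraction, if_pos (h1.trans h2.symm), h1, hn, hJn, Nat.factorial_succ]
    have h3 : (n.factorial : ℚ) ≠ 0 := by exact_mod_cast n.factorial_ne_zero
    have h4 : (n : ℚ) + 1 ≠ 0 := by positivity
    push_cast
    field_simp
    ring
  · rw [contraction, if_neg hIJ, mul_zero]
    symm
    refine sum_eq_zero fun i hi => sum_eq_zero fun j hj => ?_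
    rw [contraction, if_neg, mul_zero]
    rw [card_erase_of_mem hi, card_erase_of_mem hj]
    have := card_pos.2 ⟨i, hi⟩
    have := card_pos.2 ⟨j, hj⟩
    omega

lemma contraction_neg_swap (d : α → β → ℚ) (I : Finset α) (J : Finset β) :
    contraction (fun j i => -d i j) J I = (-1) ^ #I * contraction d I J := by
  by_cases hIJ : #I = #J
  · have hzip : ∀ (p : List α) (q : List β), p.length = q.length →
        (List.zipWith (fun j i => -d i j) q p).prod =
          (-1) ^ p.length * (List.zipWith d p q).prod := by
      intro p
      induction p with
      | nil => simp
      | cons a p ih =>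
        rintro (_ | ⟨b, q⟩) h
        · simp at h
        · rw [List.zipWith_cons_cons, List.zipWith_cons_cons, List.prod_cons, List.prod_cons,
            ih q (by simpa using h), List.length_cons]
          ring
    rw [contraction, contraction, if_pos hIJ, if_pos hIJ.symm, sum_comm, mul_left_comm, ← hIJ]
    congr 1
    rw [mul_sum]
    refine sum_congr rfl fun p hp => ?_
    rw [mul_sum]
    refine sum_congr rfl fun q hq => ?_
    rw [hzip p q (by rw [length_of_mem_orderings hp, length_of_mem_orderings hq, hIJ]),
      length_of_mem_orderings hp]
  · rw [contraction, contraction, if_neg hIJ, if_neg (Ne.symm hIJ), mul_zero]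

lemma contraction_eq_sum_perm (d : α → β → ℚ) {I : Finset α} {J : Finset β} {h : ℕ}
    (e : Fin h → α) (he : Function.Injective e) (heI : univ.image e = I)
    (f : Fin h → β) (hf : Function.Injective f) (hfJ : univ.image f = J) :
    contraction d I J = ((2 : ℚ) ^ h)⁻¹ * ∑ π : Equiv.Perm (Fin h), ∏ r, d (e r) (f (π r)) := by
  have hI : #I = h := by rw [← heI, card_image_of_injective _ he, card_univ, Fintype.card_fin]
  have hJ : #J = h := by rw [← hfJ, card_image_of_injective _ hf, card_univ, Fintype.card_fin]
  have hzip : ∀ σ τ : Equiv.Perm (Fin h),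
      (List.zipWith d (List.ofFn (e ∘ σ)) (List.ofFn (f ∘ τ))).prod =
        ∏ r, d (e r) (f ((τ * σ⁻¹) r)) := by
    intro σ τ
    have : List.zipWith d (List.ofFn (e ∘ σ)) (List.ofFn (f ∘ τ)) =
        List.ofFn fun r => d (e (σ r)) (f (τ r)) := by
      apply List.ext_getElem <;> simp
    rw [this, List.prod_ofFn]
    exact Fintype.prod_equiv σ _ _ (by simp)
  have hsum : ∀ σ : Equiv.Perm (Fin h),
      ∑ τ : Equiv.Perm (Fin h), ∏ r, d (e r) (f ((τ * σ⁻¹) r)) =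
        ∑ π : Equiv.Perm (Fin h), ∏ r, d (e r) (f (π r)) := fun σ =>
    Fintype.sum_equiv (Equiv.mulRight σ⁻¹) _ _ (by simp)
  have h3 : (h.factorial : ℚ) ≠ 0 := by exact_mod_cast h.factorial_ne_zero
  rw [contraction, if_pos (hI.trans hJ.symm), sum_orderings_eq_sum_perm e he heI]
  simp_rw [sum_orderings_eq_sum_perm f hf hfJ, hzip, hsum]
  rw [sum_const, card_univ, Fintype.card_perm, Fintype.card_fin, hI, nsmul_eq_mul]
  field_simp

end Contractions

section SubsetSums

variable {M : Type*} [AddCommMonoid M] {α : Type*} [DecidableEq α]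

lemma sum_powerset_sum_sdiff (S : Finset α) (f : Finset α → α → M) :
    ∑ I ∈ S.powerset, ∑ i ∈ S \ I, f I i = ∑ i ∈ S, ∑ I ∈ (S.erase i).powerset, f I i := by
  refine sum_comm' fun I i => ?_
  simp only [mem_powerset, mem_sdiff, subset_erase]
  tauto

lemma sum_powerset_sum_mem (S : Finset α) (f : Finset α → α → M) :
    ∑ I ∈ S.powerset, ∑ i ∈ I, f (I.erase i) i = ∑ i ∈ S, ∑ I ∈ (S.erase i).powerset, f I i := by
  rw [sum_sigma', sum_sigma']
  refine sum_bij' (fun x _ => ⟨x.2, x.1.erase x.2⟩) (fun x _ => ⟨insert x.1 x.2, x.1⟩) ?_ ?_ ?_ ?_ ?_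
  · rintro ⟨I, i⟩ h
    simp only [mem_sigma, mem_powerset] at h ⊢
    exact ⟨h.1 h.2, erase_subset_erase _ h.1⟩
  · rintro ⟨i, I⟩ h
    simp only [mem_sigma, mem_powerset, subset_erase] at h ⊢
    exact ⟨insert_subset h.1 h.2.1, mem_insert_self _ _⟩
  · rintro ⟨I, i⟩ h
    simp only [mem_sigma, mem_powerset] at h
    simp [insert_erase h.2]
  · rintro ⟨i, I⟩ h
    simp only [mem_sigma, mem_powerset, subset_erase] at h
    simp [erase_insert h.2.2]
  · rintro ⟨I, i⟩ _
    rfl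

lemma erase_sdiff_erase_of_mem (S : Finset α) {I : Finset α} {i : α} (hi : i ∈ I) :
    S.erase i \ I.erase i = S \ I := by
  ext x
  by_cases hx : x = i
  · simp [hx, hi]
  · simp [hx]

end SubsetSums

section WickFormula

variable {A : Type*} [Ring A] [Algebra ℚ A] {α β : Type*} [DecidableEq α] [DecidableEq β]

/-- The sum of all partial contractions of two symmetrized products. -/
noncomputable def wickSum (u : α → A) (v : β → A) (d : α → β → ℚ) (S : Finset α) (T : Finset β) : A :=
  ∑ I ∈ S.powerset, ∑ J ∈ T.powerset, contraction d I J • symPair u v (S \ I) (T \ J)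

lemma card_smul_wickSum (u : α → A) (v : β → A) (d : α → β → ℚ) (S : Finset α) (T : Finset β) :
    ((#S : ℚ) + #T) • wickSum u v d S T =
      ∑ i ∈ S, u i * wickSum u v d (S.erase i) T + ∑ j ∈ T, v j * wickSum u v d S (T.erase j) +
        ∑ i ∈ S, ∑ j ∈ T, d i j • wickSum u v d (S.erase i) (T.erase j) := by
  have hleft : ∑ I ∈ S.powerset, ∑ J ∈ T.powerset, ∑ i ∈ S \ I,
      contraction d I J • (u i * symPair u v ((S \ I).erase i) (T \ J)) =
        ∑ i ∈ S, u i * wickSum u v d (S.erase i) T := by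
    simp_rw [sum_comm (s := T.powerset) (t := S \ _)]
    rw [sum_powerset_sum_sdiff]
    simp only [wickSum, mul_sum, mul_smul_comm, erase_sdiff_comm]
  have hright : ∑ I ∈ S.powerset, ∑ J ∈ T.powerset, ∑ j ∈ T \ J,
      contraction d I J • (v j * symPair u v (S \ I) ((T \ J).erase j)) =
        ∑ j ∈ T, v j * wickSum u v d S (T.erase j) := by
    simp_rw [sum_powerset_sum_sdiff]
    rw [sum_comm]
    simp only [wickSum, mul_sum, mul_smul_comm, erase_sdiff_comm]
  have hpair : ∑ I ∈ S.powerset, ∑ J ∈ T.powerset, ∑ i ∈ I, ∑ j ∈ J,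
      (d i j * contraction d (I.erase i) (J.erase j)) • symPair u v (S \ I) (T \ J) =
        ∑ i ∈ S, ∑ j ∈ T, d i j • wickSum u v d (S.erase i) (T.erase j) := by
    calc _ = ∑ I ∈ S.powerset, ∑ i ∈ I, ∑ J ∈ T.powerset, ∑ j ∈ J,
          (d i j * contraction d (I.erase i) (J.erase j)) •
            symPair u v (S.erase i \ I.erase i) (T.erase j \ J.erase j) := by
          refine sum_congr rfl fun I _ => ?_
          rw [sum_comm]
          refine sum_congr rfl fun i hi => sum_congr rfl fun J _ => sum_congr rfl fun j hj => ?_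
          rw [erase_sdiff_erase_of_mem S hi, erase_sdiff_erase_of_mem T hj]
      _ = ∑ i ∈ S, ∑ I ∈ (S.erase i).powerset, ∑ j ∈ T, ∑ J ∈ (T.erase j).powerset,
          (d i j * contraction d I J) • symPair u v (S.erase i \ I) (T.erase j \ J) := by
          rw [sum_powerset_sum_mem S fun I i => ∑ J ∈ T.powerset, ∑ j ∈ J,
            (d i j * contraction d I (J.erase j)) •
              symPair u v (S.erase i \ I) (T.erase j \ J.erase j)]
          refine sum_congr rfl fun i _ => sum_congr rfl fun I _ => ?_
          exact sum_powerset_sum_mem T fun J j => (d i j * contraction d I J) •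
            symPair u v (S.erase i \ I) (T.erase j \ J)
      _ = _ := by
          refine sum_congr rfl fun i _ => ?_
          rw [sum_comm]
          simp only [wickSum, smul_sum, mul_smul]
  rw [← hleft, ← hright, ← hpair, wickSum]
  simp only [smul_sum, ← sum_add_distrib]
  refine sum_congr rfl fun I hI => sum_congr rfl fun J hJ => ?_
  rw [mem_powerset] at hI hJ
  have hS : (#S : ℚ) = #(S \ I) + #I := by exact_mod_cast (card_sdiff_add_card_eq_card hI).symm
  have hT : (#T : ℚ) = #(T \ J) + #J := by exact_mod_cast (card_sdiff_add_card_eq_card hJ).symm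
  have hsplit : ((#S : ℚ) + #T) * contraction d I J =
      contraction d I J * (#(S \ I) + #(T \ J)) + (#I + #J) * contraction d I J := by
    rw [hS, hT]; ring
  rw [smul_smul, hsplit, add_smul, mul_smul, card_smul_symPair, card_mul_contraction, smul_add]
  simp only [smul_sum, sum_smul]

/-- **Wick formula**: the product of two symmetrized products is the sum of all partial
contractions. -/
lemma symP_mul_symP (u : α → A) (v : β → A) (d : α → β → ℚ)
    (hd : ∀ i j, brk (u i) (v j) = d i j • (1 : A)) (S : Finset α) (T : Finset β) :
    symP (S.toList.map u) * symP (T.toList.map v) = wickSum u v d S T := by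
  induction hn : #S + #T using Nat.strong_induction_on generalizing S T with
  | _ n ih =>
    rcases Nat.eq_zero_or_pos n with rfl | hpos
    · obtain ⟨hS, hT⟩ : S = ∅ ∧ T = ∅ := by
        simpa [card_eq_zero] using hn
      subst hS hT
      simp [wickSum, contraction_empty, symPair, symP_nil]
    have hne : (#S : ℚ) + #T ≠ 0 := by exact_mod_cast (hn ▸ hpos).ne'
    apply (IsUnit.mk0 _ hne).smul_left_cancel.1
    have hS : ∀ i ∈ S, #(S.erase i) + 1 = #S := fun i hi => card_erase_add_one hi
    have hT : ∀ j ∈ T, #(T.erase j) + 1 = #T := fun j hj => card_erase_add_one hj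
    rw [card_smul_wickSum, add_smul, ← smul_mul_assoc, card_smul_symP, ← mul_smul_comm,
      card_smul_symP, sum_mul, mul_sum, add_assoc]
    congr 1
    · refine sum_congr rfl fun i hi => ?_
      have := hS i hi
      rw [mul_assoc, ih (#(S.erase i) + #T) (by omega) _ _ rfl]
    · rw [sum_comm, ← sum_add_distrib]
      refine sum_congr rfl fun j hj => ?_
      have hj' := hT j hj
      rw [← mul_assoc, symP_mul_eq u (v j) (fun i => d i j) (fun i => hd i j), add_mul, mul_assoc,
        ih (#S + #(T.erase j)) (by omega) _ _ rfl, sum_mul]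
      congr 1
      refine sum_congr rfl fun i hi => ?_
      have := hS i hi
      rw [smul_mul_assoc, ih (#(S.erase i) + #(T.erase j)) (by omega) _ _ rfl]

lemma brk_symP_symP (u : α → A) (v : β → A) (d : α → β → ℚ)
    (hd : ∀ i j, brk (u i) (v j) = d i j • (1 : A)) (S : Finset α) (T : Finset β) :
    brk (symP (S.toList.map u)) (symP (T.toList.map v)) =
      ∑ I ∈ S.powerset, ∑ J ∈ T.powerset,
        ((1 - (-1) ^ #I) * contraction d I J) • symPair u v (S \ I) (T \ J) := by
  have hd' : ∀ j i, brk (v j) (u i) = (-d i j) • (1 : A) := fun j i => by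
    rw [neg_smul, ← hd i j, brk, brk, neg_sub]
  rw [brk, symP_mul_symP u v d hd, symP_mul_symP v u (fun j i => -d i j) hd', wickSum, wickSum,
    sum_comm (s := T.powerset), ← sum_sub_distrib]
  refine sum_congr rfl fun I _ => ?_
  rw [← sum_sub_distrib]
  refine sum_congr rfl fun J _ => ?_
  rw [contraction_neg_swap, symPair_comm v u, ← sub_smul, sub_mul, one_mul]

end WickFormula

/-- A sum over pairs of subsets supported on pairs of equal odd cardinality. -/
lemma sum_powerset_powerset_eq_sum_odd {α β M : Type*} [AddCommMonoid M] (S : Finset α)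
    (T : Finset β) (F : Finset α → Finset β → M)
    (hcard : ∀ I J, #I ≠ #J → F I J = 0) (heven : ∀ I J, ¬ Odd #I → F I J = 0) :
    ∑ I ∈ S.powerset, ∑ J ∈ T.powerset, F I J =
      ∑ h ∈ (range (min #S #T + 1)).filter (fun h => Odd h),
        ∑ I ∈ powersetCard h S, ∑ J ∈ powersetCard h T, F I J := by
  rw [sum_powerset]
  have hinner : ∀ h, ∀ I ∈ powersetCard h S,
      ∑ J ∈ T.powerset, F I J = ∑ J ∈ powersetCard h T, F I J := by
    intro h I hI
    symm
    refine sum_subset (fun J hJ => mem_powerset.2 (mem_powersetCard.1 hJ).1) fun J hJ hJh => ?_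
    refine hcard I J fun heq => hJh (mem_powersetCard.2 ⟨mem_powerset.1 hJ, ?_⟩)
    rw [← heq, (mem_powersetCard.1 hI).2]
  rw [sum_congr rfl fun h _ => sum_congr rfl (hinner h)]
  symm
  refine sum_subset (fun h hh => ?_) fun h hh hnot => ?_
  · simp only [mem_filter, mem_range] at hh ⊢
    omega
  · refine sum_eq_zero fun I hI => sum_eq_zero fun J hJ => heven I J fun hodd => hnot ?_
    rw [mem_powersetCard] at hI hJ
    have := card_le_card hI.1
    have := card_le_card hJ.1
    rw [hI.2] at hodd
    simp only [mem_filter, mem_range]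
    exact ⟨by omega, hodd⟩


open Finset in
theorem stmt10 {A : Type*} [Ring A] [Algebra ℚ A] {l m : ℕ}
    (L : Fin l → A) (M : Fin m → A) (d : Fin l → Fin m → ℚ)
    (hd : ∀ i j, brk (L i) (M j) = d i j • (1 : A)) :
    brk (symP (List.ofFn L)) (symP (List.ofFn M))
      = ∑ h ∈ (Finset.range (min l m + 1)).filter (fun h => Odd h),
          ∑ I ∈ (Finset.powersetCard h (Finset.univ : Finset (Fin l))).attach,
            ∑ J ∈ (Finset.powersetCard h (Finset.univ : Finset (Fin m))).attach,
              ∑ π : Equiv.Perm (Fin h),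
                ((2 : ℚ) * ((2 : ℚ) ^ h)⁻¹ *
                    ∏ r : Fin h,
                      d (I.1.orderIsoOfFin (Finset.mem_powersetCard.mp I.2).2 r)
                        (J.1.orderIsoOfFin (Finset.mem_powersetCard.mp J.2).2 (π r))) •
                  symP ((I.1ᶜ.sort (· ≤ ·)).map L ++ (J.1ᶜ.sort (· ≤ ·)).map M) := by
  have hlist : ∀ {n : ℕ} (u : Fin n → A),
      symP (List.ofFn u) = symP ((univ : Finset (Fin n)).toList.map u) := fun {n} u => by
    rw [List.ofFn_eq_map]
    refine symP_perm (List.Perm.map _ ?_)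
    rw [List.perm_ext_iff_of_nodup (List.nodup_finRange n) (nodup_toList _)]
    simp
  rw [hlist, hlist, brk_symP_symP L M d hd, sum_powerset_powerset_eq_sum_odd]
  · rw [card_univ, card_univ, Fintype.card_fin, Fintype.card_fin]
    refine sum_congr rfl fun h hh => ?_
    have hodd : Odd h := (mem_filter.1 hh).2
    rw [← sum_attach]
    refine sum_congr rfl fun I _ => ?_
    rw [← sum_attach]
    refine sum_congr rfl fun J _ => ?_
    have hI := (mem_powersetCard.1 I.2).2
    have hJ := (mem_powersetCard.1 J.2).2
    have hsign : (-1 : ℚ) ^ #I.1 = -1 := by rw [hI, hodd.neg_one_pow]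
    have hsym : symPair L M (univ \ I.1) (univ \ J.1) =
        symP ((I.1ᶜ.sort (· ≤ ·)).map L ++ (J.1ᶜ.sort (· ≤ ·)).map M) := by
      rw [← compl_eq_univ_sdiff, ← compl_eq_univ_sdiff]
      exact symP_perm (((sort_perm_toList _ _).symm.map L).append
        ((sort_perm_toList _ _).symm.map M))
    rw [← sum_smul, ← mul_sum, hsym, hsign,
      contraction_eq_sum_perm d (I.1.orderEmbOfFin hI) (I.1.orderEmbOfFin hI).injective
        (image_orderEmbOfFin_univ _ _) (J.1.orderEmbOfFin hJ) (J.1.orderEmbOfFin hJ).injective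
        (image_orderEmbOfFin_univ _ _)]
    simp only [coe_orderIsoOfFin_apply]
    congr 1
    ring
  · intro I J hIJ
    rw [contraction, if_neg hIJ, mul_zero, zero_smul]
  · intro I J hI
    rw [(Nat.not_odd_iff_even.1 hI).neg_one_pow, sub_self, zero_mul, zero_smul]
end
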